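/- Let R be either β or βη. For all closed λ-terms F and M, if F M ≈_R M, then Y F ≤_R M; that is, Curry's fixed point combinator Y produces least fixed points with respect to the preorder ≤_R on λ-terms. -/

import Mathlib

/-!
The normal form of `Y F N` is reached after finitely many unfoldings of the fixed point, and a
closed `M` with `F M ≈ M` can imitate each of these unfoldings by a conversion.

Confluence of β and of βη turns convertibility to a normal form into reduction to it. It is
obtained from the diamond property of parallel reduction (`Par.diamond`), proved by induction on
the size of terms, with a flag `e` that switches η on and treats both relations at once.

Write `x` for a fresh variable. Contracting the outer redex of `Y F` gives the term
`(λg. F (g g)) (λg. F (g g))`, and because `g g` behaves under reduction exactly like a variable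
(`Par.bind_inv`), the reducts of `λg. F (g g)` are the terms `λg. B[x := g g]` with `B` a reduct
of `F x` (`half_inv`). Hence the residuals of `Y F` have the form
`(λg. B₁[x := g g]) (λg. B₂[x := g g])`, called `knot B₁ B₂`, until their outer redex is
contracted, which yields `B₁[x := knot B₂ B₂]`. If every `knot` is replaced by `M`, such a
contraction becomes a conversion from `M` to `B₁[x := M]`, valid because
`M ≈ F M` and `F M` reduces to `B₁[x := M]`. So a reduction from `knot (F x) (F x) N` to a normal
form `N'` is matched by a conversion from `M N` to `N'` with its knots replaced (`Sim.parStar`).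
As a `knot` is a β-redex, `N'` has none, and `M N ≈ N'`.
-/


/-!
Lambda terms over a variable type `V`, intrinsically taken up to
α-equivalence, via the nested-datatype ("presheaf" / well-scoped de Bruijn)
representation: the body of a λ-abstraction is a term over `Option V`,
the bound variable being `none`.
-/

/-- λ-terms over a variable type, up to α-equivalence. -/
inductive Term : Type u → Type (u + 1)
  | var {V : Type u} : V → Term V
  | app {V : Type u} : Term V → Term V → Term V
  | lam {V : Type u} : Term (Option V) → Term V

namespace Term

/-- Renaming of (free) variables. -/
def map : {V : Type u} → {W : Type v} → (V → W) → Term V → Term W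
  | _, _, f, var v => var (f v)
  | _, _, f, app M N => app (map f M) (map f N)
  | _, _, f, lam B => lam (map (Option.map f) B)

/-- Simultaneous (capture-avoiding) substitution. -/
def bind : {V : Type u} → {W : Type v} → (V → Term W) → Term V → Term W
  | _, _, f, var v => f v
  | _, _, f, app M N => app (bind f M) (bind f N)
  | _, _, f, lam B =>
      lam (bind (fun o => Option.elim o (var none) (fun v => map some (f v))) B)

/-- The set of free variables of a term. -/
def fv : {V : Type u} → Term V → Set V
  | _, var v => {v}
  | _, app M N => fv M ∪ fv N
  | _, lam B => {v | some v ∈ fv B}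

open Classical in
/-- Capture-avoiding substitution `M[v := N]`. -/
noncomputable def subst {V : Type u} (M : Term V) (v : V) (N : Term V) : Term V :=
  M.bind (fun u => if u = v then N else var u)

/-- Instantiation of the bound variable of the body of a λ-abstraction. -/
def instantiate {V : Type u} (B : Term (Option V)) (N : Term V) : Term V :=
  B.bind (fun o => Option.elim o N var)

open Classical in
/-- λ-abstraction `λ v. M` over a named variable `v`. -/
noncomputable def abs {V : Type u} (v : V) (M : Term V) : Term V :=
  lam (M.map (fun u => if u = v then none else some u))

end Term

/-- A term is closed if it has no free variables. -/
def Closed {V : Type u} (M : Term V) : Prop := Term.fv M = ∅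

/-- The β relation: `((λv.M)N, M[v := N])`. -/
def Beta {V : Type u} (M N : Term V) : Prop :=
  ∃ B P, M = Term.app (Term.lam B) P ∧ N = Term.instantiate B P

/-- The η relation: `((λv. M v), M)` with `v ∉ FV(M)`. -/
def Eta {V : Type u} (M N : Term V) : Prop :=
  M = Term.lam (Term.app (N.map some) (Term.var none))

/-- The βη relation. -/
def BetaEta {V : Type u} (M N : Term V) : Prop := Beta M N ∨ Eta M N

/-- One-step `R`-reduction: the least compatible relation containing `R`. -/
inductive Step {V : Type u} (R : Term V → Term V → Prop) : Term V → Term V → Prop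
  | base {M N : Term V} : R M N → Step R M N
  | appL {M M' N : Term V} : Step R M M' → Step R (Term.app M N) (Term.app M' N)
  | appR {M N N' : Term V} : Step R N N' → Step R (Term.app M N) (Term.app M N')
  | abs (v : V) {M M' : Term V} : Step R M M' → Step R (Term.abs v M) (Term.abs v M')

/-- `R`-reduction `→→_R`: the least preorder containing one-step `R`-reduction. -/
def Red {V : Type u} (R : Term V → Term V → Prop) : Term V → Term V → Prop :=
  Relation.ReflTransGen (Step R)

/-- `R`-equivalence `≈_R`: the least equivalence relation containing `→_R`. -/
def REquiv {V : Type u} (R : Term V → Term V → Prop) : Term V → Term V → Prop :=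
  Relation.EqvGen (Step R)

/-- A term is `R`-reduced if it admits no one-step `R`-reduction. -/
def Reduced {V : Type u} (R : Term V → Term V → Prop) (M : Term V) : Prop :=
  ¬ ∃ N, Step R M N

/-- `N` is an `R`-normal form of `M`. -/
def IsNormalFormOf {V : Type u} (R : Term V → Term V → Prop) (M N : Term V) : Prop :=
  Reduced R N ∧ REquiv R M N

/-- The preorder `≤_R`. -/
def LeR {V : Type u} (R : Term V → Term V → Prop) (F G : Term V) : Prop :=
  ∀ N : Term V, Closed N → ∀ N' : Term V,
    IsNormalFormOf R (Term.app F N) N' → IsNormalFormOf R (Term.app G N) N'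

/-- `R_{F,y} = R ∪ S_{F,y}` where `S_{F,y} = {(y, F y)}`. -/
def Rfy {V : Type u} (R : Term V → Term V → Prop) (F : Term V) (y : V) :
    Term V → Term V → Prop :=
  fun A B => R A B ∨ (A = Term.var y ∧ B = Term.app F (Term.var y))

/-- Curry's fixed point combinator `Y = λf.(λg.f(gg))(λg.f(gg))`. -/
def Y {V : Type u} : Term V :=
  Term.lam (Term.app
    (Term.lam (Term.app (Term.var (some none))
      (Term.app (Term.var none) (Term.var none))))
    (Term.lam (Term.app (Term.var (some none))
      (Term.app (Term.var none) (Term.var none)))))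

/-- `λg. M (g g)` with `g` fresh. -/
def halfY {V : Type u} (M : Term V) : Term V :=
  Term.lam (Term.app (M.map some) (Term.app (Term.var none) (Term.var none)))

/-- `Y_{M,N} = (λg. M (g g)) (λg. N (g g))` with `g ∉ FV(M) ∪ FV(N)`. -/
def Ypair {V : Type u} (M N : Term V) : Term V := Term.app (halfY M) (halfY N)

/-- `M^{(n)} N`: `n`-fold application of `M` to `N`. -/
def iterApp {V : Type u} (M : Term V) : ℕ → Term V → Term V
  | 0, N => N
  | n + 1, N => Term.app M (iterApp M n N)

/-- `Y_n = λf. f^{(n)} Y_{f,f}`. -/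
def Yn {V : Type u} (n : ℕ) : Term V :=
  Term.lam (iterApp (Term.var none) n (Ypair (Term.var none) (Term.var none)))

/-- `Υ_F = { Y_n F' : F →→_R F', n ≥ 0 } ∪ { Y_{F',F''} : F →→_R F', F →→_R F'' }`. -/
def Upsilon {V : Type u} (R : Term V → Term V → Prop) (F : Term V) : Set (Term V) :=
  {M | ∃ (n : ℕ) (F' : Term V), Red R F F' ∧ M = Term.app (Yn n) F'} ∪
  {M | ∃ F' F'' : Term V, Red R F F' ∧ Red R F F'' ∧ M = Ypair F' F''}

/-- The extended variable set `Ṽ_F = V ∪ V'_F`, where `V'_F` is a set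
disjoint from `V` in bijection with `Υ_F`. -/
def ExtV {V : Type u} (R : Term V → Term V → Prop) (F : Term V) : Type (u + 1) :=
  V ⊕ {K : Term V // K ∈ Upsilon R F}

/-- The realization map `ρ : Λ̃_F → Λ`, substituting `K` for each `v_K ∈ V'_F`. -/
def realize {V : Type u} {R : Term V → Term V → Prop} {F : Term V} :
    Term (ExtV R F) → Term V :=
  Term.bind (Sum.elim Term.var (fun K => K.1))

/-- The flattening map `φ_y : Λ̃_F → Λ`, substituting `y` for every variable in `V'_F`. -/
def flatten {V : Type u} {R : Term V → Term V → Prop} {F : Term V} (y : V) :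
    Term (ExtV R F) → Term V :=
  Term.bind (Sum.elim Term.var (fun _ => Term.var y))

/-- `λx.λy. y (x x y)`. -/
def thetaHalf {V : Type u} : Term V :=
  Term.lam (Term.lam (Term.app (Term.var none)
    (Term.app (Term.app (Term.var (some none)) (Term.var (some none)))
      (Term.var none))))

/-- Turing's fixed point combinator `Θ = (λx.λy.y(xxy))(λx.λy.y(xxy))`. -/
def Theta {V : Type u} : Term V := Term.app thetaHalf thetaHalf


namespace Term

/-! ### Algebra of renaming and substitution -/

theorem map_congr {V : Type} {W : Type} {f g : V → W} {M : Term V}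
    (h : ∀ v ∈ fv M, f v = g v) : map f M = map g M := by
  induction M generalizing W with
  | var v => simp [map, h v (by simp [fv])]
  | app A B ihA ihB =>
    simp only [map]
    rw [ihA fun v hv => h v (Or.inl hv), ihB fun v hv => h v (Or.inr hv)]
  | lam B ih =>
    simp only [map]
    rw [ih]
    rintro (_ | v) hv
    · rfl
    · simp [h v hv]

theorem map_id' {V : Type} (M : Term V) : map (fun v => v) M = M := by
  induction M with
  | var v => rfl
  | app A B ihA ihB => simp [map, ihA, ihB]
  | lam B ih =>
    simp only [map]
    conv_rhs => rw [← ih]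
    congr 2
    funext o; cases o <;> rfl

theorem map_map {V W X : Type} (f : V → W) (g : W → X) (M : Term V) :
    map g (map f M) = map (fun v => g (f v)) M := by
  induction M generalizing W X with
  | var v => rfl
  | app A B ihA ihB => simp [map, ihA, ihB]
  | lam B ih =>
    simp only [map, ih]
    congr 2
    funext o; cases o <;> rfl

/-- The substitution `σ` carried under a binder. -/
abbrev lift {V W : Type} (σ : V → Term W) : Option V → Term (Option W) :=
  fun o => Option.elim o (var none) (fun v => map some (σ v))

theorem bind_lam {V W : Type} (σ : V → Term W) (B : Term (Option V)) :
    bind σ (lam B) = lam (bind (lift σ) B) := rfl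

theorem bind_var' {V W : Type} (f : V → W) (M : Term V) :
    bind (fun v => var (f v)) M = map f M := by
  induction M generalizing W with
  | var v => rfl
  | app A B ihA ihB => simp [map, bind, ihA, ihB]
  | lam B ih =>
    simp only [map, bind, ← ih]
    congr 2
    funext o; cases o <;> rfl

theorem bind_map {V W X : Type} (f : V → W) (σ : W → Term X) (M : Term V) :
    bind σ (map f M) = bind (fun v => σ (f v)) M := by
  induction M generalizing W X with
  | var v => rfl
  | app A B ihA ihB => simp [map, bind, ihA, ihB]
  | lam B ih =>
    simp only [map, bind, ih]
    congr 2
    funext o; cases o <;> rfl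

theorem map_bind {V W X : Type} (σ : V → Term W) (f : W → X) (M : Term V) :
    map f (bind σ M) = bind (fun v => map f (σ v)) M := by
  induction M generalizing W X with
  | var v => rfl
  | app A B ihA ihB => simp [map, bind, ihA, ihB]
  | lam B ih =>
    simp only [map, bind, ih]
    congr 2
    funext o
    cases o with
    | none => rfl
    | some v => simp [map_map]

theorem bind_bind {V W X : Type} (σ : V → Term W) (τ : W → Term X) (M : Term V) :
    bind τ (bind σ M) = bind (fun v => bind τ (σ v)) M := by
  induction M generalizing W X with
  | var v => rfl
  | app A B ihA ihB => simp [bind, ihA, ihB]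
  | lam B ih =>
    simp only [bind, ih]
    congr 2
    funext o
    cases o with
    | none => rfl
    | some v => simp [bind_map, map_bind]

theorem bind_var {V : Type} (M : Term V) : bind var M = M := by
  have := bind_var' (fun v : V => v) M
  rw [map_id'] at this
  exact this

theorem bind_instantiate {V W : Type} (σ : V → Term W) (B : Term (Option V)) (P : Term V) :
    bind σ (instantiate B P) = instantiate (bind (lift σ) B) (bind σ P) := by
  simp only [instantiate, bind_bind]
  congr 1
  funext o
  cases o with
  | none => rfl
  | some v => simp [bind, bind_map, bind_var]

theorem map_instantiate {V W : Type} (f : V → W) (B : Term (Option V)) (P : Term V) :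
    map f (instantiate B P) = instantiate (map (Option.map f) B) (map f P) := by
  simp only [instantiate, map_bind, bind_map]
  congr 1
  funext o
  cases o <;> rfl

theorem instantiate_map_some {V : Type} (M P : Term V) : instantiate (map some M) P = M := by
  simp only [instantiate, bind_map]
  exact bind_var M

/-- Renaming the bound variable: `λx. B[z := x]` is `λz. B`. -/
theorem instantiate_var_none {V : Type} (B : Term (Option V)) :
    instantiate (map (Option.map some) B) (var none) = B := by
  simp only [instantiate, bind_map]
  conv_rhs => rw [← bind_var B]
  congr 1
  funext o
  cases o <;> rfl

theorem map_some_map {V W : Type} (f : V → W) (M : Term V) :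
    map (Option.map f) (map some M) = map some (map f M) := by
  simp [map_map]

theorem bind_lift_map_some {V W : Type} (σ : V → Term W) (M : Term V) :
    bind (lift σ) (map some M) = map some (bind σ M) := by
  simp [bind_map, map_bind]

/-- Terms preserve weak pullbacks of renamings: two renamings agree only on terms that come
from a common term over the pullback of the variables. -/
theorem map_pullback {A B C D : Type} {f : A → C} {g : B → C} {p : D → A} {q : D → B}
    (h : ∀ a b, f a = g b → ∃ d, p d = a ∧ q d = b)
    {M : Term A} {N : Term B} (e : map f M = map g N) :
    ∃ K : Term D, map p K = M ∧ map q K = N := by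
  induction M generalizing B C D with
  | var v =>
    cases N with
    | var w =>
      simp only [map, var.injEq] at e
      obtain ⟨d, rfl, rfl⟩ := h _ _ e
      exact ⟨var d, rfl, rfl⟩
    | app _ _ => simp [map] at e
    | lam _ => simp [map] at e
  | app M1 M2 ih1 ih2 =>
    cases N with
    | var w => simp [map] at e
    | app N1 N2 =>
      simp only [map, app.injEq] at e
      obtain ⟨K1, rfl, rfl⟩ := ih1 h e.1
      obtain ⟨K2, rfl, rfl⟩ := ih2 h e.2
      exact ⟨app K1 K2, rfl, rfl⟩
    | lam _ => simp [map] at e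
  | lam M ih =>
    cases N with
    | var w => simp [map] at e
    | app _ _ => simp [map] at e
    | lam N =>
      simp only [map, lam.injEq] at e
      have h' : ∀ a b, Option.map f a = Option.map g b →
          ∃ d, Option.map p d = a ∧ Option.map q d = b := by
        rintro (_ | a) (_ | b) hab
        · exact ⟨none, rfl, rfl⟩
        · simp at hab
        · simp at hab
        · obtain ⟨d, rfl, rfl⟩ := h a b (by simpa using hab)
          exact ⟨some d, rfl, rfl⟩
      obtain ⟨K, rfl, rfl⟩ := ih h' e
      exact ⟨lam K, rfl, rfl⟩

theorem map_injective {V W : Type} {f : V → W} (hf : Function.Injective f) {M N : Term V}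
    (e : map f M = map f N) : M = N := by
  obtain ⟨K, rfl, rfl⟩ := map_pullback (p := fun v : V => v) (q := fun v : V => v)
    (fun a b hab => ⟨a, rfl, hf hab⟩) e
  rfl

/-- The analogue of `map_pullback` for a substitution `τ` against a renaming `g`. -/
theorem bind_pullback {A B C D : Type} {τ : A → Term C} {g : B → C} {p : D → A}
    {σ : D → Term B}
    (h : ∀ a T, τ a = map g T → ∃ d, p d = a ∧ σ d = T)
    {M : Term A} {N : Term B} (e : bind τ M = map g N) :
    ∃ K : Term D, map p K = M ∧ bind σ K = N := by
  induction M generalizing B C D with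
  | var v =>
    obtain ⟨d, rfl, rfl⟩ := h _ _ e
    exact ⟨var d, rfl, rfl⟩
  | app M1 M2 ih1 ih2 =>
    cases N with
    | var w => simp [map, bind] at e
    | app N1 N2 =>
      simp only [map, bind, app.injEq] at e
      obtain ⟨K1, rfl, rfl⟩ := ih1 h e.1
      obtain ⟨K2, rfl, rfl⟩ := ih2 h e.2
      exact ⟨app K1 K2, rfl, rfl⟩
    | lam _ => simp [map, bind] at e
  | lam M ih =>
    cases N with
    | var w => simp [map, bind] at e
    | app _ _ => simp [map, bind] at e
    | lam N =>
      simp only [map, bind, lam.injEq] at e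
      have h' : ∀ a T, lift τ a = map (Option.map g) T →
          ∃ d, Option.map p d = a ∧ lift σ d = T := by
        rintro (_ | a) T hT
        · cases T with
          | var o =>
            cases o with
            | none => exact ⟨none, rfl, rfl⟩
            | some _ => simp [lift, map] at hT
          | app _ _ => simp [lift, map] at hT
          | lam _ => simp [lift, map] at hT
        · obtain ⟨T', h1, rfl⟩ := map_pullback (f := some) (g := Option.map g) (p := g)
            (q := some) (by
              rintro c (_ | b) hcb
              · simp at hcb
              · exact ⟨b, by simpa using hcb.symm, rfl⟩) hT
          obtain ⟨d, rfl, rfl⟩ := h a T' h1.symm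
          exact ⟨some d, rfl, rfl⟩
      obtain ⟨K, rfl, rfl⟩ := ih h' e
      exact ⟨lam K, rfl, rfl⟩

theorem map_some_ne_var_none {V : Type} (M : Term V) : map some M ≠ var none := by
  cases M <;> simp [map]

theorem finite_fv {V : Type} (M : Term V) : (fv M).Finite := by
  induction M with
  | var v => simp [fv]
  | app A B ihA ihB => exact ihA.union ihB
  | lam B ih => exact ih.preimage (Option.some_injective _).injOn

/-- A term whose free variables lie in the range of a renaming is in the image of that
renaming. -/
theorem exists_map_eq {V W : Type} (f : W → V) (M : Term V) (h : ∀ v ∈ fv M, ∃ w, f w = v) :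
    ∃ M0 : Term W, map f M0 = M := by
  induction M generalizing W with
  | var v =>
    obtain ⟨w, rfl⟩ := h v rfl
    exact ⟨var w, rfl⟩
  | app A B ihA ihB =>
    obtain ⟨A0, rfl⟩ := ihA f fun v hv => h v (Or.inl hv)
    obtain ⟨B0, rfl⟩ := ihB f fun v hv => h v (Or.inr hv)
    exact ⟨app A0 B0, rfl⟩
  | lam B ih =>
    obtain ⟨B0, rfl⟩ := ih (Option.map f) (by
      rintro (_ | v) hv
      · exact ⟨none, rfl⟩
      · obtain ⟨w, rfl⟩ := h v hv
        exact ⟨some w, rfl⟩)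
    exact ⟨lam B0, rfl⟩

/-- A closed term, given over the empty variable type, regarded over any variable type. -/
def up {W : Type} (M : Term PEmpty.{1}) : Term W := map PEmpty.elim M

theorem map_up {V W : Type} (f : V → W) (M : Term PEmpty.{1}) : map f (up M) = up M := by
  simp only [up, map_map]
  congr 1
  funext x; exact x.elim

theorem bind_up {V W : Type} (σ : V → Term W) (M : Term PEmpty.{1}) : bind σ (up M) = up M := by
  rw [up, up, bind_map, ← bind_var']
  congr 1
  funext x; exact x.elim

theorem of_map_eq_up {V W : Type} {f : V → W} {P : Term V} {M : Term PEmpty.{1}}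
    (e : map f P = up M) : P = up M := by
  obtain ⟨K, h1, h2⟩ := map_pullback (p := PEmpty.elim) (q := fun x => x)
    (fun _ b _ => b.elim) e
  rw [map_id'] at h2
  rw [← h1, h2]; rfl

/-- The number of symbols of a term. -/
def size : {V : Type} → Term V → ℕ
  | _, var _ => 1
  | _, app M N => size M + size N + 1
  | _, lam B => size B + 1

theorem size_map {V W : Type} (f : V → W) (M : Term V) : size (map f M) = size M := by
  induction M generalizing W with
  | var v => rfl
  | app A B ihA ihB => simp [map, size, ihA, ihB]
  | lam B ih => simp [map, size, ih]

end Term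

open Term

/-! ### Parallel reduction -/

/-- Parallel reduction: simultaneous contraction of any set of redexes present in a term.
The flag `e` tells whether η-redexes may be contracted along with the β-redexes. -/
inductive Par (e : Bool) : {V : Type} → Term V → Term V → Prop
  | var {V : Type} (v : V) : Par e (var v) (var v)
  | app {V : Type} {A A' B B' : Term V} : Par e A A' → Par e B B' → Par e (app A B) (app A' B')
  | lam {V : Type} {B B' : Term (Option V)} : Par e B B' → Par e (lam B) (lam B')
  | beta {V : Type} {B B' : Term (Option V)} {P P' : Term V} : Par e B B' → Par e P P' →
      Par e (app (lam B) P) (instantiate B' P')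
  | eta {V : Type} {P P' : Term V} : e = true → Par e P P' →
      Par e (lam (app (P.map some) (var none))) P'

namespace Par

variable {e : Bool}

theorem refl {V : Type} (M : Term V) : Par e M M := by
  induction M with
  | var v => exact .var v
  | app A B ihA ihB => exact .app ihA ihB
  | lam B ih => exact .lam ih

theorem var_inv {V : Type} {v : V} {N : Term V} (h : Par e (Term.var v) N) :
    N = Term.var v := by
  cases h; rfl

theorem app_inv {V : Type} {A B N : Term V} (h : Par e (Term.app A B) N) :
    (∃ A' B', N = Term.app A' B' ∧ Par e A A' ∧ Par e B B') ∨
    (∃ C C' B', A = Term.lam C ∧ N = instantiate C' B' ∧ Par e C C' ∧ Par e B B') := by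
  cases h with
  | app h1 h2 => exact .inl ⟨_, _, rfl, h1, h2⟩
  | beta h1 h2 => exact .inr ⟨_, _, _, rfl, rfl, h1, h2⟩

theorem lam_inv {V : Type} {C : Term (Option V)} {N : Term V} (h : Par e (Term.lam C) N) :
    (∃ C', N = Term.lam C' ∧ Par e C C') ∨
    (e = true ∧ ∃ P, C = Term.app (P.map some) (Term.var none) ∧ Par e P N) := by
  cases h with
  | lam h => exact .inl ⟨_, rfl, h⟩
  | eta he h => exact .inr ⟨he, _, rfl, h⟩

theorem map {V W : Type} (f : V → W) {M N : Term V} (h : Par e M N) :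
    Par e (M.map f) (N.map f) := by
  induction h generalizing W with
  | var v => exact .var _
  | app _ _ ih1 ih2 => exact .app (ih1 f) (ih2 f)
  | lam _ ih => exact .lam (ih _)
  | beta _ _ ih1 ih2 =>
    rw [map_instantiate]
    exact .beta (ih1 _) (ih2 _)
  | eta he _ ih =>
    simp only [Term.map, map_some_map]
    exact .eta he (ih f)

theorem bind {V W : Type} {σ τ : V → Term W} (hs : ∀ v, Par e (σ v) (τ v)) {M N : Term V}
    (h : Par e M N) : Par e (M.bind σ) (N.bind τ) := by
  have hl : ∀ {V W : Type} {σ τ : V → Term W}, (∀ v, Par e (σ v) (τ v)) →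
      ∀ o, Par e (lift σ o) (lift τ o) := by
    rintro V W σ τ hs (_ | v)
    · exact .var _
    · exact (hs v).map some
  induction h generalizing W with
  | var v => exact hs v
  | app _ _ ih1 ih2 => exact .app (ih1 hs) (ih2 hs)
  | lam _ ih => exact .lam (ih (hl hs))
  | beta _ _ ih1 ih2 =>
    rw [bind_instantiate]
    exact .beta (ih1 (hl hs)) (ih2 hs)
  | @eta V P P' he _ ih =>
    have := Par.eta he (ih hs)
    rw [← bind_lift_map_some] at this
    exact this

theorem instantiate {V : Type} {B B' : Term (Option V)} {P P' : Term V}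
    (h1 : Par e B B') (h2 : Par e P P') : Par e (instantiate B P) (instantiate B' P') := by
  refine h1.bind ?_
  rintro (_ | v)
  · exact h2
  · exact .var v

/-- A substitution by terms of the shape `a` or `a b` with `a`, `b` variables neither creates
redexes nor is affected by reduction, so reductions of the substituted term come from reductions
of the original term. -/
theorem bind_inv {V W : Type} {σ : V → Term W}
    (hs : ∀ v, (∃ a, σ v = Term.var a) ∨ (∃ a b, σ v = Term.app (Term.var a) (Term.var b)))
    {B : Term V} {A' : Term W} (h : Par e (B.bind σ) A') :
    ∃ B', Par e B B' ∧ A' = B'.bind σ := by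
  generalize hA : B.bind σ = A at h
  have hl : ∀ {V W : Type} {σ : V → Term W},
      (∀ v, (∃ a, σ v = Term.var a) ∨ (∃ a b, σ v = Term.app (Term.var a) (Term.var b))) →
      (∀ v, (∃ a, lift σ v = Term.var a) ∨
        (∃ a b, lift σ v = Term.app (Term.var a) (Term.var b))) := by
    rintro V W σ hs (_ | v)
    · exact .inl ⟨_, rfl⟩
    · rcases hs v with ⟨a, ha⟩ | ⟨a, b, ha⟩
      · exact .inl ⟨some a, by simp [lift, ha, Term.map]⟩
      · exact .inr ⟨some a, some b, by simp [lift, ha, Term.map]⟩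
  induction h generalizing V with
  | var w =>
    refine ⟨B, .refl _, hA.symm⟩
  | app h1 h2 ih1 ih2 =>
    cases B with
    | var v =>
      have hA' : σ v = _ := hA
      rcases hs v with ⟨a, ha⟩ | ⟨a, b, ha⟩
      · simp [ha] at hA'
      · rw [ha, Term.app.injEq] at hA'
        obtain ⟨rfl, rfl⟩ := hA'
        exact ⟨Term.var v, .refl _, by rw [h1.var_inv, h2.var_inv, ← ha]; rfl⟩
    | app B1 B2 =>
      simp only [Term.bind, Term.app.injEq] at hA
      obtain ⟨B1', p1, rfl⟩ := ih1 hs hA.1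
      obtain ⟨B2', p2, rfl⟩ := ih2 hs hA.2
      exact ⟨_, .app p1 p2, rfl⟩
    | lam _ => simp [Term.bind] at hA
  | lam h ih =>
    cases B with
    | var v =>
      have hA' : σ v = _ := hA
      rcases hs v with ⟨a, ha⟩ | ⟨a, b, ha⟩ <;> simp [ha] at hA'
    | app _ _ => simp [Term.bind] at hA
    | lam B =>
      rw [bind_lam, Term.lam.injEq] at hA
      obtain ⟨B', p, rfl⟩ := ih (hl hs) hA
      exact ⟨_, .lam p, rfl⟩
  | beta h1 h2 ih1 ih2 =>
    cases B with
    | var v =>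
      have hA' : σ v = _ := hA
      rcases hs v with ⟨a, ha⟩ | ⟨a, b, ha⟩ <;> simp [ha] at hA'
    | app B1 B2 =>
      simp only [Term.bind, Term.app.injEq] at hA
      obtain ⟨hA1, hA2⟩ := hA
      obtain ⟨B2', p2, rfl⟩ := ih2 hs hA2
      cases B1 with
      | var v =>
        have hA' : σ v = _ := hA1
        rcases hs v with ⟨a, ha⟩ | ⟨a, b, ha⟩ <;> simp [ha] at hA'
      | app _ _ => simp [Term.bind] at hA1
      | lam C =>
        rw [bind_lam, Term.lam.injEq] at hA1
        obtain ⟨C', p1, rfl⟩ := ih1 (hl hs) hA1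
        exact ⟨_, .beta p1 p2, (bind_instantiate _ _ _).symm⟩
    | lam _ => simp [Term.bind] at hA
  | eta he h ih =>
    cases B with
    | var v =>
      have hA' : σ v = _ := hA
      rcases hs v with ⟨a, ha⟩ | ⟨a, b, ha⟩ <;> simp [ha] at hA'
    | app _ _ => simp [Term.bind] at hA
    | lam C =>
      rw [bind_lam, Term.lam.injEq] at hA
      -- A variable `o` cannot be replaced by `P none`, as `none` occurs in no `map some (σ v)`.
      have key : ∀ o, lift σ o = Term.var none → o = none := by
        rintro (_ | v) ho
        · rfl
        · exact absurd ho (map_some_ne_var_none _)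
      cases C with
      | var o =>
        exfalso
        change lift σ o = _ at hA
        cases o with
        | none => simp [lift] at hA
        | some v =>
          change Term.map some (σ v) = _ at hA
          rcases hs v with ⟨a, ha⟩ | ⟨a, b, ha⟩ <;> simp [ha, Term.map] at hA
      | app C1 C2 =>
        simp only [Term.bind, Term.app.injEq] at hA
        obtain ⟨hC1, hC2⟩ := hA
        cases C2 with
        | var o =>
          obtain rfl := key o hC2
          obtain ⟨K, rfl, hK⟩ := bind_pullback (p := some) (σ := σ) (by
            rintro (_ | v) T hT
            · exact absurd hT.symm (map_some_ne_var_none _)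
            · exact ⟨v, rfl, map_injective (Option.some_injective _) hT⟩) hC1
          obtain ⟨B', p, rfl⟩ := ih hs hK
          exact ⟨B', .eta he p, rfl⟩
        | app _ _ => simp [Term.bind] at hC2
        | lam _ => simp [Term.bind] at hC2
      | lam _ => simp [Term.bind] at hA

theorem map_inv {V W : Type} {f : V → W} {B : Term V} {A' : Term W} (h : Par e (B.map f) A') :
    ∃ B', Par e B B' ∧ A' = B'.map f := by
  rw [← bind_var'] at h
  obtain ⟨B', p, rfl⟩ := bind_inv (fun v => .inl ⟨f v, rfl⟩) h
  exact ⟨B', p, bind_var' _ _⟩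

end Par

/-! ### Confluence -/

namespace Par

variable {e : Bool}

/-- The abstraction `λx. P x` may be contracted to `P` or reduced in its body. -/
theorem join_lam_eta (he : e = true) {V : Type} {P P1 : Term V} {C' : Term (Option V)}
    (ih : ∀ N1 N2, Par e P N1 → Par e P N2 → ∃ Q, Par e N1 Q ∧ Par e N2 Q)
    (h1 : Par e (Term.app (P.map some) (Term.var none)) C') (h2 : Par e P P1) :
    ∃ Q, Par e (Term.lam C') Q ∧ Par e P1 Q := by
  rcases h1.app_inv with ⟨A', B', rfl, hA, hB⟩ | ⟨D, D', B', hD, rfl, hDD, hB⟩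
  · obtain rfl := hB.var_inv
    obtain ⟨P', hP', rfl⟩ := hA.map_inv
    obtain ⟨Q, q1, q2⟩ := ih _ _ hP' h2
    exact ⟨Q, .eta he q1, q2⟩
  · obtain rfl := hB.var_inv
    cases P with
    | var _ => simp [Term.map] at hD
    | app _ _ => simp [Term.map] at hD
    | lam C =>
      simp only [Term.map, Term.lam.injEq] at hD
      subst hD
      obtain ⟨C'', hC, rfl⟩ := hDD.map_inv
      rw [instantiate_var_none]
      exact ih _ _ (.lam hC) h2

/-- The redex `(λx. C) P` may be contracted or reduced inside its two halves. -/
theorem join_app_beta {V : Type} {C C' : Term (Option V)} {P L' P1 P2 : Term V}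
    (ih : ∀ {V : Type} (M : Term V), M.size < (Term.app (Term.lam C) P).size →
      ∀ N1 N2, Par e M N1 → Par e M N2 → ∃ Q, Par e N1 Q ∧ Par e N2 Q)
    (h1 : Par e (Term.lam C) L') (hP1 : Par e P P1) (h2 : Par e C C') (hP2 : Par e P P2) :
    ∃ Q, Par e (Term.app L' P1) Q ∧ Par e (Term.instantiate C' P2) Q := by
  obtain ⟨P3, hP13, hP23⟩ := ih P (by simp only [size]; omega) _ _ hP1 hP2
  rcases h1.lam_inv with ⟨C1, rfl, hC1⟩ | ⟨he, Q, rfl, hQ⟩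
  · obtain ⟨C3, hC13, hC23⟩ := ih C (by simp only [size]; omega) _ _ hC1 h2
    exact ⟨_, .beta hC13 hP13, hC23.instantiate hP23⟩
  · rcases h2.app_inv with ⟨A', B', rfl, hA, hB⟩ | ⟨D, D', B', hD, rfl, hDD, hB⟩
    · obtain rfl := hB.var_inv
      obtain ⟨Q', hQ', rfl⟩ := hA.map_inv
      obtain ⟨Q3, q1, q2⟩ := ih Q (by simp [size, size_map]; omega) _ _ hQ hQ'
      refine ⟨_, .app q1 hP13, ?_⟩
      have : Term.instantiate (Term.app (Q'.map some) (Term.var none)) P2 = Term.app Q' P2 := by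
        change Term.app (Term.instantiate (Q'.map some) P2) P2 = _
        rw [instantiate_map_some]
      rw [this]
      exact .app q2 hP23
    · obtain rfl := hB.var_inv
      cases Q with
      | var _ => simp [Term.map] at hD
      | app _ _ => simp [Term.map] at hD
      | lam C =>
        simp only [Term.map, Term.lam.injEq] at hD
        subst hD
        obtain ⟨C'', hC, rfl⟩ := hDD.map_inv
        rw [instantiate_var_none]
        exact ih (Term.app (Term.lam C) P) (by simp [size, size_map, Term.map]) _ _
          (.app hQ hP1) (.beta hC hP2)

theorem diamond {V : Type} (M : Term V) : ∀ N1 N2, Par e M N1 → Par e M N2 →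
    ∃ Q, Par e N1 Q ∧ Par e N2 Q := by
  induction hn : M.size using Nat.strong_induction_on generalizing V with
  | _ n ih' =>
  subst hn
  have ih : ∀ {W : Type} (M' : Term W), M'.size < M.size →
      ∀ N1 N2, Par e M' N1 → Par e M' N2 → ∃ Q, Par e N1 Q ∧ Par e N2 Q :=
    fun M' h => ih' _ h M' rfl
  intro N1 N2 h1 h2
  cases M with
  | var v =>
    rw [h1.var_inv, h2.var_inv]
    exact ⟨_, .refl _, .refl _⟩
  | app A B =>
    rcases h1.app_inv with ⟨A1, B1, rfl, hA1, hB1⟩ | ⟨C, C1, B1, rfl, rfl, hC1, hB1⟩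
    · rcases h2.app_inv with ⟨A2, B2, rfl, hA2, hB2⟩ | ⟨C, C2, B2, rfl, rfl, hC2, hB2⟩
      · obtain ⟨A3, a1, a2⟩ := ih A (by simp only [size]; omega) _ _ hA1 hA2
        obtain ⟨B3, b1, b2⟩ := ih B (by simp only [size]; omega) _ _ hB1 hB2
        exact ⟨_, .app a1 b1, .app a2 b2⟩
      · exact join_app_beta ih hA1 hB1 hC2 hB2
    · rcases h2.app_inv with ⟨A2, B2, rfl, hA2, hB2⟩ | ⟨C', C2, B2, hC, rfl, hC2, hB2⟩
      · obtain ⟨Q, q1, q2⟩ := join_app_beta ih hA2 hB2 hC1 hB1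
        exact ⟨Q, q2, q1⟩
      · simp only [Term.lam.injEq] at hC
        subst hC
        obtain ⟨C3, c1, c2⟩ := ih C (by simp only [size]; omega) _ _ hC1 hC2
        obtain ⟨B3, b1, b2⟩ := ih B (by simp only [size]; omega) _ _ hB1 hB2
        exact ⟨_, c1.instantiate b1, c2.instantiate b2⟩
  | lam C =>
    rcases h1.lam_inv with ⟨C1, rfl, hC1⟩ | ⟨he, P, rfl, hP1⟩
    · rcases h2.lam_inv with ⟨C2, rfl, hC2⟩ | ⟨he, P, rfl, hP2⟩
      · obtain ⟨C3, c1, c2⟩ := ih C (by simp [size]) _ _ hC1 hC2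
        exact ⟨_, .lam c1, .lam c2⟩
      · exact join_lam_eta he (ih P (by simp [size, size_map]; omega)) hC1 hP2
    · rcases h2.lam_inv with ⟨C2, rfl, hC2⟩ | ⟨_, P', hP', hP2⟩
      · obtain ⟨Q, q1, q2⟩ := join_lam_eta he (ih P (by simp [size, size_map]; omega)) hC2 hP1
        exact ⟨Q, q2, q1⟩
      · simp only [Term.app.injEq, and_true] at hP'
        obtain rfl := map_injective (Option.some_injective _) hP'
        exact ih P (by simp [size, size_map]; omega) _ _ hP1 hP2

end Par

/-- Iterated parallel reduction. -/
abbrev ParStar (e : Bool) {V : Type} : Term V → Term V → Prop :=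
  Relation.ReflTransGen (Par e)

/-- The equivalence relation generated by parallel reduction. -/
abbrev ParEq (e : Bool) {V : Type} : Term V → Term V → Prop :=
  Relation.EqvGen (Par e)

section

variable {e : Bool}

theorem ParStar.parEq {V : Type} {M N : Term V} (h : ParStar e M N) : ParEq e M N := by
  induction h with
  | refl => exact .refl _
  | tail _ h ih => exact ih.trans _ _ _ (.rel _ _ h)

theorem church_rosser {V : Type} {M N : Term V} (h : ParEq e M N) :
    ∃ Q, ParStar e M Q ∧ ParStar e N Q := by
  have hc : ∀ a b c : Term V, Par e a b → Par e a c →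
      ∃ d, Relation.ReflGen (Par e) b d ∧ ParStar e c d := by
    intro a b c hb hc
    obtain ⟨d, h1, h2⟩ := Par.diamond a b c hb hc
    exact ⟨d, .single h1, .single h2⟩
  have := Relation.equivalence_join_reflTransGen hc
  induction h with
  | rel x y h => exact ⟨y, .single h, .refl⟩
  | refl x => exact this.refl x
  | symm x y _ ih => exact this.symm ih
  | trans x y z _ _ ih1 ih2 => exact this.trans ih1 ih2

theorem ParEq.app {V : Type} {A A' B B' : Term V} (h1 : ParEq e A A') (h2 : ParEq e B B') :
    ParEq e (Term.app A B) (Term.app A' B') := by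
  have l : ParEq e (Term.app A B) (Term.app A' B) := by
    induction h1 with
    | rel x y h => exact .rel _ _ (.app h (.refl _))
    | refl x => exact .refl _
    | symm x y _ ih => exact .symm _ _ ih
    | trans x y z _ _ ih1 ih2 => exact .trans _ _ _ ih1 ih2
  refine .trans _ _ _ l ?_
  clear l h1
  induction h2 with
  | rel x y h => exact .rel _ _ (.app (.refl _) h)
  | refl x => exact .refl _
  | symm x y _ ih => exact .symm _ _ ih
  | trans x y z _ _ ih1 ih2 => exact .trans _ _ _ ih1 ih2

theorem ParEq.lam {V : Type} {A A' : Term (Option V)} (h : ParEq e A A') :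
    ParEq e (Term.lam A) (Term.lam A') := by
  induction h with
  | rel x y h => exact .rel _ _ (.lam h)
  | refl x => exact .refl _
  | symm x y _ ih => exact .symm _ _ ih
  | trans x y z _ _ ih1 ih2 => exact .trans _ _ _ ih1 ih2

theorem ParStar.bind {V W : Type} (σ : V → Term W) {M N : Term V} (h : ParStar e M N) :
    ParStar e (M.bind σ) (N.bind σ) :=
  Relation.ReflTransGen.lift (Term.bind σ) (fun _ _ (h : Par e _ _) => h.bind fun _ => .refl _) _ _ h

theorem ParStar.map {V W : Type} (f : V → W) {M N : Term V} (h : ParStar e M N) :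
    ParStar e (M.map f) (N.map f) :=
  Relation.ReflTransGen.lift (Term.map f) (fun _ _ (h : Par e _ _) => h.map f) _ _ h

theorem ParStar.map_inv {V W : Type} {f : V → W} {M : Term V} {N : Term W}
    (h : ParStar e (M.map f) N) : ∃ N', ParStar e M N' ∧ N = N'.map f := by
  induction h with
  | refl => exact ⟨M, .refl, rfl⟩
  | tail _ h ih =>
    obtain ⟨K, hK, rfl⟩ := ih
    obtain ⟨N', hN, rfl⟩ := h.map_inv
    exact ⟨N', hK.tail hN, rfl⟩

end

/-! ### Comparison with one-step reduction -/

/-- The relation β (for `e = false`) or βη (for `e = true`). -/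
def relOf (V : Type) : Bool → Term V → Term V → Prop
  | false => Beta
  | true => BetaEta

theorem relOf_beta {V : Type} (e : Bool) {M N : Term V} (h : Beta M N) : relOf V e M N := by
  cases e
  · exact h
  · exact .inl h

theorem Step.par {e : Bool} {V : Type} {M N : Term V} (h : Step (relOf V e) M N) :
    Par e M N := by
  induction h with
  | base h =>
    have hb : ∀ {M N : Term V}, Beta M N → Par e M N := by
      rintro _ _ ⟨B, P, rfl, rfl⟩
      exact .beta (.refl _) (.refl _)
    cases e with
    | false => exact hb h
    | true =>
      rcases h with h | h
      · exact hb h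
      · rw [h]; exact .eta rfl (.refl _)
  | appL _ ih => exact .app ih (.refl _)
  | appR _ ih => exact .app (.refl _) ih
  | abs v _ ih => exact .lam (ih.map _)

/-- Every abstraction is an abstraction over any sufficiently fresh named variable `v`. -/
theorem map_lam_eq_abs {V W : Type} (f : W → V) (B : Term (Option W)) {v : V}
    (hv : v ∉ f '' fv (lam B)) :
    (lam B).map f = Term.abs v (B.map fun o => o.elim v f) := by
  simp only [Term.map, Term.abs, map_map]
  congr 1
  apply Term.map_congr
  rintro (_ | w) hw
  · simp
  · have : f w ≠ v := fun h => hv ⟨w, hw, h⟩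
    simp [this]

theorem Red.app {V : Type} {R : Term V → Term V → Prop} {A A' B B' : Term V}
    (h1 : Red R A A') (h2 : Red R B B') : Red R (Term.app A B) (Term.app A' B') :=
  Relation.ReflTransGen.trans
    (Relation.ReflTransGen.lift (fun X => Term.app X B) (fun _ _ h => Step.appL h) _ _ h1)
    (Relation.ReflTransGen.lift (fun X => Term.app A' X) (fun _ _ h => Step.appR h) _ _ h2)

theorem Red.abs {V : Type} {R : Term V → Term V → Prop} (v : V) {A A' : Term V}
    (h : Red R A A') : Red R (Term.abs v A) (Term.abs v A') :=
  Relation.ReflTransGen.lift (Term.abs v) (fun _ _ h => Step.abs v h) _ _ h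

/-- Parallel reduction is simulated by reduction. The renaming `f` serves to pass under
binders: one-step reduction reaches the body of an abstraction only after its bound variable has
been given a name in `V`. -/
theorem Par.red {e : Bool} {V : Type} [Infinite V] {W : Type} {M N : Term W} (h : Par e M N)
    (f : W → V) : Red (relOf V e) (M.map f) (N.map f) := by
  have hlam : ∀ {W : Type} {B B' : Term (Option W)} (f : W → V),
      (∀ g : Option W → V, Red (relOf V e) (B.map g) (B'.map g)) →
      Red (relOf V e) ((Term.lam B).map f) ((Term.lam B').map f) := by
    intro W B B' f ih
    obtain ⟨v, hv⟩ := Set.Infinite.exists_notMem_finset (Set.infinite_univ (α := V))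
      (((finite_fv (Term.lam B)).image f).union ((finite_fv (Term.lam B')).image f)).toFinset
    simp only [Set.Finite.mem_toFinset, Set.mem_union, not_or] at hv
    rw [map_lam_eq_abs f B hv.2.1, map_lam_eq_abs f B' hv.2.2]
    exact Red.abs v (ih _)
  induction h with
  | var w => exact .refl
  | app _ _ ih1 ih2 => exact Red.app (ih1 f) (ih2 f)
  | lam _ ih => exact hlam f ih
  | beta _ _ ih1 ih2 =>
    refine Relation.ReflTransGen.tail (Red.app (hlam f ih1) (ih2 f)) ?_
    rw [map_instantiate]
    exact .base (relOf_beta e ⟨_, _, rfl, rfl⟩)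
  | eta he _ ih =>
    refine Relation.ReflTransGen.head ?_ (ih f)
    subst he
    simp only [Term.map, map_some_map]
    exact .base (.inr rfl)

theorem Red.rEquiv {V : Type} {R : Term V → Term V → Prop} {M N : Term V} (h : Red R M N) :
    REquiv R M N := by
  induction h with
  | refl => exact .refl _
  | tail _ h ih => exact ih.trans _ _ _ (.rel _ _ h)

theorem rEquiv_iff_parEq {e : Bool} {V : Type} [Infinite V] {M N : Term V} :
    REquiv (relOf V e) M N ↔ ParEq e M N := by
  constructor
  · intro h
    induction h with
    | rel x y h => exact .rel _ _ h.par
    | refl x => exact .refl _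
    | symm x y _ ih => exact .symm _ _ ih
    | trans x y z _ _ ih1 ih2 => exact .trans _ _ _ ih1 ih2
  · intro h
    induction h with
    | rel x y h =>
      have := h.red (fun v : V => v)
      rw [map_id', map_id'] at this
      exact this.rEquiv
    | refl x => exact .refl _
    | symm x y _ ih => exact .symm _ _ ih
    | trans x y z _ _ ih1 ih2 => exact .trans _ _ _ ih1 ih2

theorem parStar_eq_of_reduced {e : Bool} {V : Type} [Infinite V] {M N : Term V}
    (hM : Reduced (relOf V e) M) (h : ParStar e M N) : N = M := by
  induction h with
  | refl => rfl
  | tail _ h ih =>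
    subst ih
    have := h.red (fun v : V => v)
    rw [map_id', map_id'] at this
    rcases Relation.ReflTransGen.cases_head this with h | ⟨c, hc, _⟩
    · exact h.symm
    · exact absurd ⟨c, hc⟩ hM

/-- The term contains no β-redex. -/
def NoBeta : {V : Type} → Term V → Prop
  | _, var _ => True
  | _, app A B => NoBeta A ∧ NoBeta B ∧ ∀ C, A ≠ lam C
  | _, lam B => NoBeta B

theorem exists_step_of_not_noBeta {e : Bool} {V : Type} [Infinite V] {W : Type} (M : Term W)
    (h : ¬ NoBeta M) (f : W → V) : ∃ N, Step (relOf V e) (M.map f) N := by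
  induction M with
  | var v => exact absurd trivial h
  | app A B ihA ihB =>
    by_cases hA : NoBeta A
    · by_cases hB : NoBeta B
      · by_cases hC : ∃ C, A = lam C
        · obtain ⟨C, rfl⟩ := hC
          exact ⟨_, .base (relOf_beta e ⟨_, _, rfl, rfl⟩)⟩
        · exact absurd ⟨hA, hB, fun C hAC => hC ⟨C, hAC⟩⟩ h
      · obtain ⟨N, hN⟩ := ihB hB f
        exact ⟨_, .appR hN⟩
    · obtain ⟨N, hN⟩ := ihA hA f
      exact ⟨_, .appL hN⟩
  | lam B ih =>
    obtain ⟨v, hv⟩ := Set.Infinite.exists_notMem_finset (Set.infinite_univ (α := V))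
      ((finite_fv (lam B)).image f).toFinset
    simp only [Set.Finite.mem_toFinset] at hv
    obtain ⟨N, hN⟩ := ih h (fun o => o.elim v f)
    rw [map_lam_eq_abs f B hv.2]
    exact ⟨_, .abs v hN⟩

theorem Reduced.noBeta {e : Bool} {V : Type} [Infinite V] {M : Term V}
    (hM : Reduced (relOf V e) M) : NoBeta M := by
  by_contra h
  have := exists_step_of_not_noBeta (e := e) M h (fun v : V => v)
  rw [map_id'] at this
  exact hM this

/-! ### Simulating unfoldings of the fixed point -/

/-- The self-application `g g` of the most recently bound variable `g`. -/
def selfApp {W : Type} : PUnit.{1} → Term (Option W) :=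
  fun _ => app (var none) (var none)

/-- For a term `B` with a single free variable `x`, the abstraction `λg. B[x := g g]`. -/
def half {W : Type} (B : Term PUnit.{1}) : Term W := lam (B.bind selfApp)

/-- The redex `(λg. B₁[x := g g]) (λg. B₂[x := g g])`. When `B₁` and `B₂` are reducts of `F x`,
this is a reduct of `Ypair F F`. -/
def knot {W : Type} (B₁ B₂ : Term PUnit.{1}) : Term W := app (half B₁) (half B₂)

theorem map_half {V W : Type} (f : V → W) (B : Term PUnit.{1}) : (half B).map f = half B := by
  simp only [half, Term.map, map_bind]
  rfl

theorem bind_half {V W : Type} (σ : V → Term W) (B : Term PUnit.{1}) :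
    (half B).bind σ = half B := by
  simp only [half, bind_lam, bind_bind]
  rfl

theorem map_knot {V W : Type} (f : V → W) (B₁ B₂ : Term PUnit.{1}) :
    (knot B₁ B₂).map f = knot B₁ B₂ := by
  simp only [knot, Term.map, map_half]

theorem bind_knot {V W : Type} (σ : V → Term W) (B₁ B₂ : Term PUnit.{1}) :
    (knot B₁ B₂).bind σ = knot B₁ B₂ := by
  simp only [knot, Term.bind, bind_half]

theorem of_map_eq_knot {V W : Type} {f : V → W} {P : Term V} {B₁ B₂ : Term PUnit.{1}}
    (h : P.map f = knot B₁ B₂) : P = knot B₁ B₂ := by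
  have : (knot B₁ B₂ : Term W) = up (knot B₁ B₂) := (map_knot _ _ _).symm
  rw [this] at h
  rw [of_map_eq_up h]
  exact map_knot _ _ _

theorem selfApp_bind_inv {e : Bool} {W : Type} {B : Term PUnit.{1}} {A : Term (Option W)}
    (h : Par e (B.bind selfApp) A) : ∃ B', Par e B B' ∧ A = B'.bind selfApp :=
  Par.bind_inv (fun _ => .inr ⟨none, none, rfl⟩) h

theorem half_inv {e : Bool} {W : Type} {B : Term PUnit.{1}} {A : Term W}
    (h : Par e (half B) A) : ∃ B', Par e B B' ∧ A = half B' := by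
  rcases h.lam_inv with ⟨C, rfl, hC⟩ | ⟨_, P, hP, _⟩
  · obtain ⟨B', hB, rfl⟩ := selfApp_bind_inv hC
    exact ⟨B', hB, rfl⟩
  · exfalso
    -- The body `B[x := g g]` is never `P g` with `g` not free in `P`: in `B[x := g g]` the
    -- variable `g` occurs as an argument only in `g g`.
    cases B with
    | var v =>
      simp only [Term.bind, selfApp, Term.app.injEq, and_true] at hP
      exact map_some_ne_var_none P hP.symm
    | app B1 B2 =>
      simp only [Term.bind, Term.app.injEq] at hP
      cases B2 <;> simp [Term.bind, selfApp] at hP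
    | lam _ => simp [Term.bind] at hP

/-- The term `B[x := N]` for a term `B` with a single free variable `x`. -/
def plug {W : Type} (B : Term PUnit.{1}) (N : Term W) : Term W := B.bind fun _ => N

theorem instantiate_selfApp_half {W : Type} (B₁ B₂ : Term PUnit.{1}) :
    instantiate (B₁.bind selfApp) (half B₂ : Term W) = plug B₁ (knot B₂ B₂) := by
  simp only [instantiate, bind_bind, plug]
  rfl

/-- `Sim e E M A B` holds if `B` is obtained from `A` by replacing some subterms `knot B₁ B₂`,
where `B₁` and `B₂` are reducts of `E`, by the closed term `M`. -/
inductive Sim (e : Bool) (E : Term PUnit.{1}) (M : Term PEmpty.{1}) :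
    {W : Type} → Term W → Term W → Prop
  | var {W : Type} (w : W) : Sim e E M (var w) (var w)
  | app {W : Type} {A A' B B' : Term W} : Sim e E M A A' → Sim e E M B B' →
      Sim e E M (app A B) (app A' B')
  | lam {W : Type} {A A' : Term (Option W)} : Sim e E M A A' → Sim e E M (lam A) (lam A')
  | knot {W : Type} {B₁ B₂ : Term PUnit.{1}} : ParStar e E B₁ → ParStar e E B₂ →
      Sim e E M (knot B₁ B₂ : Term W) (up M)

namespace Sim

variable {e : Bool} {E : Term PUnit.{1}} {M : Term PEmpty.{1}}

theorem refl {W : Type} (A : Term W) : Sim e E M A A := by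
  induction A with
  | var v => exact .var v
  | app A B ihA ihB => exact .app ihA ihB
  | lam B ih => exact .lam ih

theorem map {V W : Type} (f : V → W) {A B : Term V} (h : Sim e E M A B) :
    Sim e E M (A.map f) (B.map f) := by
  induction h generalizing W with
  | var w => exact .var _
  | app _ _ ih1 ih2 => exact .app (ih1 f) (ih2 f)
  | lam _ ih => exact .lam (ih _)
  | knot h1 h2 => rw [map_knot, map_up]; exact .knot h1 h2

theorem bind {V W : Type} {σ τ : V → Term W} (hs : ∀ v, Sim e E M (σ v) (τ v)) {A B : Term V}
    (h : Sim e E M A B) : Sim e E M (A.bind σ) (B.bind τ) := by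
  induction h generalizing W with
  | var w => exact hs w
  | app _ _ ih1 ih2 => exact .app (ih1 hs) (ih2 hs)
  | lam _ ih =>
    refine .lam (ih ?_)
    rintro (_ | v)
    · exact .var _
    · exact (hs v).map some
  | knot h1 h2 => rw [bind_knot, bind_up]; exact .knot h1 h2

theorem map_inv {V W : Type} {f : V → W} {P : Term V} {Q : Term W}
    (h : Sim e E M (P.map f) Q) : ∃ Q', Q = Q'.map f ∧ Sim e E M P Q' := by
  generalize hA : P.map f = A at h
  induction h generalizing V with
  | var w => exact ⟨P, hA.symm, .refl _⟩
  | app h1 h2 ih1 ih2 =>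
    cases P with
    | var _ => simp [Term.map] at hA
    | app P1 P2 =>
      simp only [Term.map, Term.app.injEq] at hA
      obtain ⟨Q1, rfl, q1⟩ := ih1 hA.1
      obtain ⟨Q2, rfl, q2⟩ := ih2 hA.2
      exact ⟨_, rfl, .app q1 q2⟩
    | lam _ => simp [Term.map] at hA
  | lam h ih =>
    cases P with
    | var _ => simp [Term.map] at hA
    | app _ _ => simp [Term.map] at hA
    | lam P =>
      simp only [Term.map, Term.lam.injEq] at hA
      obtain ⟨Q, rfl, q⟩ := ih hA
      exact ⟨_, rfl, .lam q⟩
  | knot h1 h2 =>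
    rw [of_map_eq_knot hA]
    exact ⟨_, (map_up _ _).symm, .knot h1 h2⟩

theorem app_inv {W : Type} {A B Q : Term W} (h : Sim e E M (Term.app A B) Q) :
    (∃ A' B', Q = Term.app A' B' ∧ Sim e E M A A' ∧ Sim e E M B B') ∨
    (∃ B₁ B₂, A = half B₁ ∧ B = half B₂ ∧ Q = up M ∧ ParStar e E B₁ ∧ ParStar e E B₂) := by
  generalize hA : Term.app A B = C at h
  cases h with
  | var w => simp at hA
  | app h1 h2 =>
    simp only [Term.app.injEq] at hA
    obtain ⟨rfl, rfl⟩ := hA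
    exact .inl ⟨_, _, rfl, h1, h2⟩
  | lam _ => simp at hA
  | knot h1 h2 =>
    simp only [_root_.knot, Term.app.injEq] at hA
    exact .inr ⟨_, _, hA.1, hA.2, rfl, h1, h2⟩

theorem lam_inv {W : Type} {A : Term (Option W)} {Q : Term W} (h : Sim e E M (Term.lam A) Q) :
    ∃ A', Q = Term.lam A' ∧ Sim e E M A A' := by
  generalize hA : Term.lam A = C at h
  cases h with
  | var w => simp at hA
  | app _ _ => simp at hA
  | lam h =>
    simp only [Term.lam.injEq] at hA
    subst hA
    exact ⟨_, rfl, h⟩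
  | knot _ _ => simp [_root_.knot] at hA

theorem var_inv {W : Type} {w : W} {Q : Term W} (h : Sim e E M (Term.var w) Q) :
    Q = Term.var w := by
  generalize hA : Term.var w = C at h
  cases h with
  | var _ => rfl
  | app _ _ => simp at hA
  | lam _ => simp at hA
  | knot _ _ => simp [_root_.knot] at hA

/-- Reductions of the left-hand term are matched by conversions of the right-hand one, as soon
as `M` is a fixed point of `E`: contracting a `knot` amounts to the expansion of `M` to `E[M]`,
followed by the reductions already made in the copy of `E`. -/
theorem par (hfix : ∀ W : Type, ParEq e (plug E (up M : Term W)) (up M)) {W : Type}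
    {A A' B : Term W} (hs : Sim e E M A B) (h : Par e A A') :
    ∃ B', ParEq e B B' ∧ Sim e E M A' B' := by
  induction h with
  | var w => exact ⟨B, .refl _, hs⟩
  | app h1 h2 ih1 ih2 =>
    rcases hs.app_inv with ⟨P, Q, rfl, p, q⟩ | ⟨B₁, B₂, rfl, rfl, rfl, p, q⟩
    · obtain ⟨P', hP, p'⟩ := ih1 p
      obtain ⟨Q', hQ, q'⟩ := ih2 q
      exact ⟨_, hP.app hQ, .app p' q'⟩
    · obtain ⟨B₁', hB1, rfl⟩ := half_inv h1
      obtain ⟨B₂', hB2, rfl⟩ := half_inv h2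
      exact ⟨_, .refl _, .knot (p.tail hB1) (q.tail hB2)⟩
  | lam h ih =>
    obtain ⟨P, rfl, p⟩ := hs.lam_inv
    obtain ⟨P', hP, p'⟩ := ih p
    exact ⟨_, hP.lam, .lam p'⟩
  | beta h1 h2 ih1 ih2 =>
    rcases hs.app_inv with ⟨P, Q, rfl, p, q⟩ | ⟨B₁, B₂, hB₁, rfl, rfl, p, q⟩
    · obtain ⟨P₀, rfl, p₀⟩ := p.lam_inv
      obtain ⟨P', hP, p'⟩ := ih1 p₀
      obtain ⟨Q', hQ, q'⟩ := ih2 q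
      refine ⟨Term.instantiate P' Q', ?_, ?_⟩
      · exact .trans _ _ _ (hP.lam.app hQ) (.rel _ _ (.beta (.refl _) (.refl _)))
      · refine p'.bind ?_
        rintro (_ | v)
        · exact q'
        · exact .var v
    · simp only [half, Term.lam.injEq] at hB₁
      subst hB₁
      obtain ⟨B₁', hB1, rfl⟩ := selfApp_bind_inv h1
      obtain ⟨B₂', hB2, rfl⟩ := half_inv h2
      rw [instantiate_selfApp_half]
      refine ⟨plug B₁' (up M), ?_, ?_⟩
      · exact .trans _ _ _ (.symm _ _ (hfix _)) (ParStar.bind _ (p.tail hB1)).parEq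
      · exact (Sim.refl B₁').bind fun _ => .knot (q.tail hB2) (q.tail hB2)
  | eta he h ih =>
    obtain ⟨_, rfl, hbody⟩ := hs.lam_inv
    rcases hbody.app_inv with ⟨_, _, rfl, hs₁, hs₂⟩ | ⟨_, _, _, hB, _⟩
    · obtain rfl := hs₂.var_inv
      obtain ⟨Q, rfl, q⟩ := hs₁.map_inv
      obtain ⟨Q', hQ, q'⟩ := ih q
      exact ⟨Q', .trans _ _ _ (.rel _ _ (.eta he (.refl _))) hQ, q'⟩
    · simp [half] at hB

theorem parStar (hfix : ∀ W : Type, ParEq e (plug E (up M : Term W)) (up M)) {W : Type}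
    {A A' B : Term W} (hs : Sim e E M A B) (h : ParStar e A A') :
    ∃ B', ParEq e B B' ∧ Sim e E M A' B' := by
  induction h with
  | refl => exact ⟨B, .refl _, hs⟩
  | tail _ h ih =>
    obtain ⟨C, hC, c⟩ := ih
    obtain ⟨D, hD, d⟩ := c.par hfix h
    exact ⟨D, .trans _ _ _ hC hD, d⟩

/-- Since every `knot` is a β-redex, a term without β-redexes is related to itself only. -/
theorem eq_of_noBeta {W : Type} {A B : Term W} (hs : Sim e E M A B) (h : NoBeta A) : A = B := by
  induction hs with
  | var w => rfl
  | app _ _ ih1 ih2 => rw [ih1 h.1, ih2 h.2.1]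
  | lam _ ih => rw [ih h]
  | knot _ _ => exact absurd rfl (h.2.2 _)

end Sim

theorem exists_up_of_closed {V : Type} {M : Term V} (h : Closed M) :
    ∃ M0 : Term PEmpty.{1}, M = up M0 := by
  obtain ⟨M0, h0⟩ := exists_map_eq (PEmpty.elim : PEmpty.{1} → V) M (by
    intro v hv
    rw [h] at hv
    exact hv.elim)
  exact ⟨M0, h0.symm⟩

/-- Convertibility of closed terms does not depend on the ambient variable type. -/
theorem ParEq.of_up {e : Bool} {V : Type} {A B : Term PEmpty.{1}}
    (h : ParEq e (up A : Term V) (up B)) : ParEq e A B := by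
  obtain ⟨Q, h1, h2⟩ := church_rosser h
  obtain ⟨Q1, q1, rfl⟩ := h1.map_inv
  obtain ⟨Q2, q2, hQ⟩ := h2.map_inv
  obtain rfl := map_injective (fun x _ _ => x.elim) hQ
  exact .trans _ _ _ q1.parEq (.symm _ _ q2.parEq)

/-- With `E = F x`, the term `knot E E` is the β-contractum of `Y F`. -/
theorem parEq_Y_knot {e : Bool} {V : Type} (F : Term PEmpty.{1}) :
    ParEq e (app Y (up F) : Term V) (knot (app (up F) (var ⟨⟩)) (app (up F) (var ⟨⟩))) := by
  have h : Par e (app Y (up F) : Term V) _ := .beta (.refl _) (.refl _)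
  refine .rel _ _ ?_
  convert h using 1
  simp [knot, half, selfApp, bind_up, instantiate, Term.bind, map_up]

/-- Let `R` be either β or βη. For all closed λ-terms `F` and `M`,
if `F M ≈_R M`, then `Y F ≤_R M`: Curry's fixed point combinator `Y` produces
least fixed points with respect to the preorder `≤_R`. -/
theorem Y_produces_least_fixed_points {V : Type} [Infinite V]
    (R : Term V → Term V → Prop) (hR : R = @Beta V ∨ R = @BetaEta V)
    (F M : Term V) (hF : Closed F) (hM : Closed M)
    (hfix : REquiv R (Term.app F M) M) :
    LeR R (Term.app Y F) M := by
  obtain ⟨e, rfl⟩ : ∃ e, R = relOf V e := by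
    rcases hR with rfl | rfl
    · exact ⟨false, rfl⟩
    · exact ⟨true, rfl⟩
  obtain ⟨F, rfl⟩ := exists_up_of_closed hF
  obtain ⟨M, rfl⟩ := exists_up_of_closed hM
  have hfix0 : ParEq e (Term.app F M) M := ParEq.of_up (rEquiv_iff_parEq.1 hfix)
  have hfix' : ∀ W : Type,
      ParEq e (plug (app (up F) (var ⟨⟩)) (up M : Term W)) (up M) := by
    intro W
    obtain ⟨Q, h1, h2⟩ := church_rosser hfix0
    have hplug : plug (app (up F) (var ⟨⟩)) (up M : Term W) = up (Term.app F M) := by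
      simp only [plug, Term.bind, bind_up]
      rfl
    rw [hplug]
    exact .trans _ _ _ (h1.map _).parEq (.symm _ _ (h2.map _).parEq)
  rintro N - N' ⟨hred, heq⟩
  refine ⟨hred, rEquiv_iff_parEq.2 ?_⟩
  have hK : ParEq e (app (knot (app (up F) (var ⟨⟩)) (app (up F) (var ⟨⟩))) N) N' :=
    .trans _ _ _ (.symm _ _ ((parEq_Y_knot F).app (.refl _))) (rEquiv_iff_parEq.1 heq)
  obtain ⟨Q, h1, h2⟩ := church_rosser hK
  obtain rfl := parStar_eq_of_reduced hred h2
  obtain ⟨B, hB, hs⟩ := Sim.parStar hfix' (.app (.knot .refl .refl) (.refl N)) h1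
  rwa [← hs.eq_of_noBeta hred.noBeta] at hB
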